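/- Let n ≥ 1 and d ≥ 1 be integers, let c ∈ ℝ^n have strictly positive entries c_p > 0, and let θ ∈ ℝ^d satisfy Σ_{j=1}^d max(θ_j, 0) > 0. Define H ∈ ℝ^{n×d} by H(p, j) = max(c_p·θ_j, 0) (i.e., H(p, :) = ReLU(c_p·θ)). Then for every p and j the row-normalized matrix satisfies Y(p, j) = max(θ_j, 0) / (Σ_{j'=1}^d max(θ_{j'}, 0)), independent of p; hence every column of Y is constant and the gating score α = Σ_{j=1}^d Var(Y(:, j)) equals 0. In particular, for the GCN expert under the all-ones input with ReLU activation, whose first-layer output has rows H^{(1)}_{GCN}(p, :) = ReLU(F_{pp}^{−1}·θ) with θ = 𝟙ᵀΘ and F a diagonal matrix with positive diagonal entries, the gating score is 0 whenever Σ_j max(θ_j, 0) > 0. -/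

import Mathlib

open Finset

/-- Empirical variance of `n` real values. -/
noncomputable def empVar {n : ℕ} (v : Fin n → ℝ) : ℝ :=
  (∑ p, (v p - (∑ q, v q) / n) ^ 2) / n

/-- Row normalization `Y(p, j) = H(p, j) / (Σ_{j'} H(p, j'))`. -/
noncomputable def rowNorm {n d : ℕ} (H : Fin n → Fin d → ℝ) (p : Fin n) (j : Fin d) : ℝ :=
  H p j / ∑ j', H p j'

/-- The variance-based gating score `α = Σ_j Var(Y(:, j))` of an expert with
first-layer output `H`. -/
noncomputable def gatingScore {n d : ℕ} (H : Fin n → Fin d → ℝ) : ℝ :=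
  ∑ j, empVar (fun p => rowNorm H p j)

theorem empVar_const {n : ℕ} (a : ℝ) : empVar (fun _ : Fin n => a) = 0 := by
  have mean_eq (p : Fin n) : (∑ _q : Fin n, a) / n = a := by
    have hn : (n : ℝ) ≠ 0 := Nat.cast_ne_zero.mpr p.pos.ne'
    rw [sum_const, card_univ, Fintype.card_fin, nsmul_eq_mul, mul_div_cancel_left₀ a hn]
  have sum_sq_eq : ∑ _p : Fin n, (a - (∑ _q : Fin n, a) / n) ^ 2 = 0 :=
    sum_eq_zero fun p _ => by rw [mean_eq p, sub_self, zero_pow two_ne_zero]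
  rw [empVar, sum_sq_eq, zero_div]

theorem rowNorm_row_mul {n d : ℕ} {c : Fin n → ℝ} {p : Fin n} (hc : c p ≠ 0)
    (K : Fin n → Fin d → ℝ) (j : Fin d) :
    rowNorm (fun q k => c q * K q k) p j = rowNorm K p j := by
  simp only [rowNorm, ← mul_sum, mul_div_mul_left _ _ hc]

theorem gatingScore_eq_zero_of_rowNorm_eq {n d : ℕ} {H : Fin n → Fin d → ℝ} {y : Fin d → ℝ}
    (hy : ∀ p j, rowNorm H p j = y j) : gatingScore H = 0 := by
  simp only [gatingScore, hy, empVar_const, sum_const_zero]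

/-- For the GCN expert under all-ones input with ReLU activation, whose first-layer
output has rows `H(p, :) = ReLU(c_p · θ)` with `c_p > 0`, the row-normalized matrix
satisfies `Y(p, j) = max(θ_j, 0)/Σ_{j'} max(θ_{j'}, 0)` independently of `p`, so every
column of `Y` is constant and the gating score vanishes. -/
theorem gcn_gatingScore_eq_zero
    (n d : ℕ) (hn : 1 ≤ n) (hd : 1 ≤ d)
    (c : Fin n → ℝ) (hc : ∀ p, 0 < c p)
    (θ : Fin d → ℝ) (hθ : 0 < ∑ j, max (θ j) 0)
    (H : Fin n → Fin d → ℝ) (hH : ∀ p j, H p j = max (c p * θ j) 0) :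
    (∀ (p : Fin n) (j : Fin d),
      rowNorm H p j = max (θ j) 0 / ∑ j', max (θ j') 0) ∧
    gatingScore H = 0 := by
  have relu_mul : H = fun p j => c p * max (θ j) 0 := by
    funext p j
    rw [hH, mul_max_of_nonneg _ _ (hc p).le, mul_zero]
  have rowNorm_eq (p : Fin n) (j : Fin d) :
      rowNorm H p j = max (θ j) 0 / ∑ j', max (θ j') 0 := by
    rw [relu_mul]
    exact rowNorm_row_mul (hc p).ne' (fun _ k => max (θ k) 0) j
  exact ⟨rowNorm_eq, gatingScore_eq_zero_of_rowNorm_eq rowNorm_eq⟩
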